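/- (Dayton–Zeng conjecture, breadth one case) Let F be a polynomial system with isolated singular solution x̂ₑ of multiplicity μ ≥ 2 whose Jacobian F'(x̂ₑ) has corank one with unit null vector r₁. Then for any h ∈ ℂⁿ with h*r₁ ≠ 0, the deflated system J(x,ν) = (F(x), F'(x)·ν, h*ν − 1) has (x̂ₑ, r₁/(h*r₁)) as an isolated singular solution of multiplicity exactly μ − 1. -/

import Mathlib

open MvPolynomial Matrix

/-- `dEval p α f` is the value of the scaled differential operator
`D(α) = (1/α!) ∂^α` applied to `f` and evaluated at the point `p`
(equivalently, the `α`-th Taylor coefficient of `f` at `p`). -/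
noncomputable def dEval {σ : Type*} [Fintype σ] [DecidableEq σ]
    (p : σ → ℂ) (α : σ →₀ ℕ) (f : MvPolynomial σ ℂ) : ℂ :=
  MvPolynomial.coeff α
    (MvPolynomial.aeval (fun i => MvPolynomial.X i + MvPolynomial.C (p i)) f)

/-- The value at `p` on `f` of the differential operator with coefficient vector `c`,
`L = ∑ c_α D(α)`. -/
noncomputable def applyOp {σ : Type*} [Fintype σ] [DecidableEq σ]
    (c : (σ →₀ ℕ) →₀ ℂ) (p : σ → ℂ) (f : MvPolynomial σ ℂ) : ℂ :=
  Finsupp.linearCombination ℂ (fun α => dEval p α f) c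

/-- The Max Noether (local dual) space of an ideal `I` at the point `p`,
represented by the coefficient vectors of differential operators annihilating `I` at `p`. -/
noncomputable def dualSpace {σ : Type*} [Fintype σ] [DecidableEq σ]
    (p : σ → ℂ) (I : Ideal (MvPolynomial σ ℂ)) : Submodule ℂ ((σ →₀ ℕ) →₀ ℂ) :=
  ⨅ f ∈ I, LinearMap.ker (Finsupp.linearCombination ℂ (fun α => dEval p α f))

/-- The truncation of the dual space to operators of order at most `k`. -/
noncomputable def dualSpaceLe {σ : Type*} [Fintype σ] [DecidableEq σ]
    (p : σ → ℂ) (I : Ideal (MvPolynomial σ ℂ)) (k : ℕ) : Submodule ℂ ((σ →₀ ℕ) →₀ ℂ) :=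
  dualSpace p I ⊓ Finsupp.supported ℂ ℂ {α | (α.sum fun _ m => m) ≤ k}

/-- The anti-differentiation map `Φⱼ` on coefficient vectors of differential operators:
`(Φⱼ c)(β) = c(β + eⱼ)`. -/
noncomputable def shiftOp {σ : Type*} [DecidableEq σ] (j : σ)
    (c : (σ →₀ ℕ) →₀ ℂ) : (σ →₀ ℕ) →₀ ℂ :=
  Finsupp.comapDomain (fun β => β + Finsupp.single j 1) c
    ((add_left_injective _).injOn)

/-- Jacobian matrix of a polynomial system at a point. -/
noncomputable def jacMat {σ : Type*} [Fintype σ] [DecidableEq σ]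
    (F : σ → MvPolynomial σ ℂ) (p : σ → ℂ) : Matrix σ σ ℂ :=
  Matrix.of fun i j => MvPolynomial.eval p (MvPolynomial.pderiv j (F i))

/-- The deflated system `J(x,ν) = (F(x), F'(x)·ν, h*ν − 1)`, a system of `2n+1` polynomials
in the `2n` variables `(x, ν)`. -/
noncomputable def deflSys {n : ℕ} (F : Fin n → MvPolynomial (Fin n) ℂ) (h : Fin n → ℂ) :
    (Fin n ⊕ (Fin n ⊕ Unit)) → MvPolynomial (Fin n ⊕ Fin n) ℂ :=
  Sum.elim (fun i => MvPolynomial.rename Sum.inl (F i))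
    (Sum.elim
      (fun i => ∑ j, MvPolynomial.rename Sum.inl (MvPolynomial.pderiv j (F i)) *
          MvPolynomial.X (Sum.inr j))
      (fun _ => (∑ j, MvPolynomial.C (starRingEnd ℂ (h j)) * MvPolynomial.X (Sum.inr j)) - 1))

section Calculus

variable {σ A B : Type*} [CommRing A]

theorem sum_aeval_pderiv_mul_X [Fintype σ] [CommRing B] [Algebra A B] (x v : σ → B)
    (p : MvPolynomial σ A) (i : σ) :
    ∑ j, aeval x (pderiv j (p * X i)) * v j
      = (∑ j, aeval x (pderiv j p) * v j) * x i + aeval x p * v i := by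
  classical
  simp only [pderiv_mul, pderiv_X, map_add, map_mul, aeval_X, add_mul,
    Finset.sum_add_distrib, Finset.sum_mul]
  refine congrArg₂ (· + ·) (Finset.sum_congr rfl fun j _ => by ring) ?_
  rw [Finset.sum_eq_single i]
  · simp
  · intro j _ hj
    simp [Ne.symm hj]
  · simp

/-- First order Taylor expansion of a polynomial, with remainder divisible by `ε ^ 2`. -/
theorem sq_dvd_aeval_add_mul_sub [Fintype σ] [CommRing B] [Algebra A B] (x v : σ → B) (ε : B)
    (f : MvPolynomial σ A) :
    ε ^ 2 ∣ aeval (fun i => x i + ε * v i) f - aeval x f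
      - ε * ∑ j, aeval x (pderiv j f) * v j := by
  induction f using MvPolynomial.induction_on with
  | C a => simp
  | add p q hp hq =>
    convert dvd_add hp hq using 1
    simp only [map_add, add_mul, Finset.sum_add_distrib]
    ring
  | mul_X p i hp =>
    obtain ⟨q, hq⟩ := hp
    refine ⟨(∑ j, aeval x (pderiv j p) * v j) * v i + q * (x i + ε * v i), ?_⟩
    rw [sum_aeval_pderiv_mul_X, map_mul, map_mul, aeval_X, aeval_X]
    linear_combination (x i + ε * v i) * hq

/-- The chain rule for a polynomial evaluated along a polynomial curve. -/
theorem derivative_aeval [Fintype σ] (y : σ → Polynomial A) (f : MvPolynomial σ A) :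
    Polynomial.derivative (aeval y f)
      = ∑ j, aeval y (pderiv j f) * Polynomial.derivative (y j) := by
  induction f using MvPolynomial.induction_on with
  | C a => simp [Polynomial.algebraMap_eq]
  | add p q hp hq => simp [hp, hq, add_mul, Finset.sum_add_distrib]
  | mul_X p i hp =>
    rw [sum_aeval_pderiv_mul_X, map_mul, aeval_X, Polynomial.derivative_mul, hp]

theorem coeff_zero_aeval (y : σ → Polynomial A) (f : MvPolynomial σ A) :
    (aeval y f).coeff 0 = eval (fun i => (y i).coeff 0) f := by
  induction f using MvPolynomial.induction_on with
  | C a => simp [Polynomial.algebraMap_eq]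
  | add p q hp hq => simp [hp, hq]
  | mul_X p i hp => simp [Polynomial.mul_coeff_zero, hp]

end Calculus

section Curves

variable {σ ι : Type*}

/-- Congruent points give congruent values of a polynomial. -/
theorem aeval_sub_aeval_mem {B : Type*} [CommRing B] [Algebra ℂ B] (K : Ideal B) {x y : σ → B}
    (h : ∀ i, x i - y i ∈ K) (f : MvPolynomial σ ℂ) : aeval x f - aeval y f ∈ K := by
  rw [← Ideal.Quotient.eq, ← Ideal.Quotient.mkₐ_eq_mk ℂ, ← AlgHom.comp_apply, ← AlgHom.comp_apply,
    comp_aeval, comp_aeval]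
  congr 2
  funext i
  simpa [Ideal.Quotient.eq] using h i

theorem X_pow_dvd_aeval_of_mem_pow {z : σ → Polynomial ℂ} (hz : ∀ i, Polynomial.X ∣ z i) {k : ℕ}
    {g : MvPolynomial σ ℂ} (hg : g ∈ idealOfVars σ ℂ ^ k) : Polynomial.X ^ k ∣ aeval z g := by
  rw [← Ideal.mem_span_singleton, ← Ideal.span_singleton_pow]
  have h : (idealOfVars σ ℂ).map (aeval z) ≤ Ideal.span {Polynomial.X} := by
    rw [Ideal.map_span, Ideal.span_le]
    rintro _ ⟨_, ⟨i, rfl⟩, rfl⟩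
    simpa [Ideal.mem_span_singleton] using hz i
  have := Ideal.pow_right_mono h k
  rw [← Ideal.map_pow] at this
  exact this (Ideal.mem_map_of_mem _ hg)

/-- The Taylor expansion of a polynomial at the point `p`. -/
noncomputable def taylorAt (p : σ → ℂ) : MvPolynomial σ ℂ →ₐ[ℂ] MvPolynomial σ ℂ :=
  aeval fun i => X i + C (p i)

theorem aeval_taylorAt {B : Type*} [CommRing B] [Algebra ℂ B] (p : σ → ℂ) (z : σ → B)
    (f : MvPolynomial σ ℂ) :
    aeval z (taylorAt p f) = aeval (fun i => z i + algebraMap ℂ B (p i)) f := by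
  rw [taylorAt, ← AlgHom.comp_apply, comp_aeval]
  simp

theorem coeff_zero_taylorAt (p : σ → ℂ) (f : MvPolynomial σ ℂ) :
    coeff 0 (taylorAt p f) = eval p f := by
  have := aeval_taylorAt (B := ℂ) p 0 f
  simpa [aeval_zero', coe_aeval_eq_eval, constantCoeff_eq] using this

theorem taylorAt_surjective (p : σ → ℂ) : Function.Surjective (taylorAt p) := fun g =>
  ⟨taylorAt (-p) g, by
    rw [taylorAt, aeval_taylorAt]
    simp [algebraMap_eq]⟩

/-- The pairing of coefficient vectors of differential operators with Taylor expansions. -/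
noncomputable def pairing : ((σ →₀ ℕ) →₀ ℂ) →ₗ[ℂ] MvPolynomial σ ℂ →ₗ[ℂ] ℂ :=
  Finsupp.linearCombination ℂ (lcoeff ℂ)

theorem pairing_apply (c : (σ →₀ ℕ) →₀ ℂ) (g : MvPolynomial σ ℂ) :
    pairing c g = Finsupp.linearCombination ℂ (fun α => coeff α g) c := by
  simp [pairing, Finsupp.linearCombination_apply, Finsupp.sum, LinearMap.sum_apply]

theorem pairing_monomial (c : (σ →₀ ℕ) →₀ ℂ) (α : σ →₀ ℕ) : pairing c (monomial α 1) = c α := by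
  classical
  simp +contextual [pairing_apply, Finsupp.linearCombination_apply, Finsupp.sum,
    coeff_monomial, eq_comm]

variable [Fintype σ]

/-- There is a polynomial curve through `p`, parametrized by the linear form `ℓ`, which solves the
system `G` up to order `d`. -/
def HasCurve (G : ι → MvPolynomial σ ℂ) (p ℓ : σ → ℂ) (d : ℕ) : Prop :=
  ∃ y : σ → Polynomial ℂ, (∀ i, (y i).coeff 0 = p i) ∧
    (∀ r, Polynomial.X ^ d ∣ aeval y (G r)) ∧
    Polynomial.X ^ d ∣ ∑ i, Polynomial.C (ℓ i) * (y i - Polynomial.C (p i)) - Polynomial.X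

/-- The linear form `ℓ` is injective on the tangent space of the system `G` at `p`. -/
def InjOnTangent (G : ι → MvPolynomial σ ℂ) (p ℓ : σ → ℂ) : Prop :=
  ∀ u : σ → ℂ,
    (∀ r, Polynomial.X ^ 2 ∣
      aeval (fun i => Polynomial.C (p i) + Polynomial.X * Polynomial.C (u i)) (G r)) →
    ∑ i, ℓ i * u i = 0 → u = 0

/-- The linear form with coefficient vector `v`. -/
noncomputable def linForm : (σ → ℂ) →ₗ[ℂ] MvPolynomial σ ℂ := Fintype.linearCombination ℂ X

theorem linForm_apply (v : σ → ℂ) : linForm v = ∑ i, C (v i) * X i := by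
  simp [linForm, Fintype.linearCombination_apply, smul_eq_C_mul]

theorem linForm_mem (v : σ → ℂ) : linForm v ∈ idealOfVars σ ℂ := by
  rw [linForm_apply]
  exact Ideal.sum_mem _ fun i _ => Ideal.mul_mem_left _ _ (Ideal.subset_span ⟨i, rfl⟩)

theorem coeff_single_linForm (v : σ → ℂ) (i : σ) :
    coeff (Finsupp.single i 1) (linForm v) = v i := by
  classical
  simp [linForm_apply, coeff_sum, coeff_C_mul, coeff_X, Finsupp.single_left_inj]

theorem sub_linForm_mem_sq {g : MvPolynomial σ ℂ} (hg : coeff 0 g = 0) :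
    g - linForm (fun i => coeff (Finsupp.single i 1) g) ∈ idealOfVars σ ℂ ^ 2 := by
  rw [mem_pow_idealOfVars_iff']
  intro α hα
  obtain h | h : α.degree = 0 ∨ α.degree = 1 := by omega
  · obtain rfl : α = 0 := (Finsupp.degree_eq_zero_iff α).1 h
    simp [hg, linForm_apply, coeff_sum, coeff_C_mul, coeff_zero_X]
  · obtain ⟨i, rfl⟩ : ∃ i, α = Finsupp.single i 1 := (Finsupp.sum_eq_one_iff α).1 h
    simp [coeff_single_linForm]

theorem idealOfVars_le_sup_sq {G : ι → MvPolynomial σ ℂ} {ℓ : σ → ℂ}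
    (hG : ∀ r, coeff 0 (G r) = 0) (hinj : InjOnTangent G 0 ℓ) :
    idealOfVars σ ℂ ≤
      Ideal.span (Set.range G) ⊔ Ideal.span {linForm ℓ} ⊔ idealOfVars σ ℂ ^ 2 := by
  classical
  set K := Ideal.span (Set.range G) ⊔ Ideal.span {linForm ℓ} ⊔ idealOfVars σ ℂ ^ 2
  have hGK : ∀ r, G r ∈ K := fun r =>
    Ideal.mem_sup_left (Ideal.mem_sup_left (Ideal.subset_span ⟨r, rfl⟩))
  let V : Submodule ℂ (σ → ℂ) := (K.restrictScalars ℂ).comap linForm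
  have hrow : ∀ r, (fun i => coeff (Finsupp.single i 1) (G r)) ∈ V := fun r => by
    have := K.sub_mem (hGK r) (Ideal.mem_sup_right (sub_linForm_mem_sq (hG r)))
    simpa [V] using this
  have hℓ : ℓ ∈ V := by
    change linForm ℓ ∈ K
    exact Ideal.mem_sup_left (Ideal.mem_sup_right (Ideal.subset_span rfl))
  have hV : V = ⊤ := by
    by_contra hne
    obtain ⟨φ, hφ, hle⟩ := V.exists_le_ker_of_lt_top (lt_top_iff_ne_top.2 hne)
    have hφsum : ∀ v, φ v = ∑ i, v i * φ (Pi.single i 1) := fun v => by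
      conv_lhs => rw [← Finset.univ_sum_single v]
      rw [map_sum]
      refine Finset.sum_congr rfl fun i _ => ?_
      rw [← smul_eq_mul, ← map_smul, ← Pi.single_smul]
      simp
    have hu := hinj (fun i => φ (Pi.single i 1)) (fun r => ?_) ?_
    · refine hφ (LinearMap.ext fun v => ?_)
      rw [hφsum]
      exact Finset.sum_eq_zero fun i _ => by rw [congrFun hu i]; simp
    · have h1 := X_pow_dvd_aeval_of_mem_pow
        (fun i => dvd_mul_right Polynomial.X (Polynomial.C (φ (Pi.single i 1))))
        (sub_linForm_mem_sq (hG r))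
      have h2 := hle (hrow r)
      rw [LinearMap.mem_ker, hφsum] at h2
      have h3 : aeval (fun i => Polynomial.X * Polynomial.C (φ (Pi.single i 1)))
          (linForm fun i => coeff (Finsupp.single i 1) (G r)) = 0 := by
        have := congrArg (fun z => Polynomial.X * Polynomial.C z) h2
        simp only [map_sum, map_mul, map_zero, mul_zero, Finset.mul_sum] at this
        rw [linForm_apply, map_sum, ← this]
        exact Finset.sum_congr rfl fun i _ => by
          rw [map_mul, aeval_X, algHom_C, Polynomial.algebraMap_eq]; ring
      rw [map_sub, h3, sub_zero] at h1
      simpa using h1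
    · rw [← hφsum]
      exact hle hℓ
  rw [Ideal.span_le]
  rintro _ ⟨i, rfl⟩
  have : Pi.single i 1 ∈ V := hV ▸ Submodule.mem_top
  change linForm (Pi.single i 1) ∈ K at this
  simpa [linForm] using this

theorem idealOfVars_le_sup_pow {G : ι → MvPolynomial σ ℂ} {ℓ : σ → ℂ}
    (hG : ∀ r, coeff 0 (G r) = 0) (hinj : InjOnTangent G 0 ℓ) (k : ℕ) :
    idealOfVars σ ℂ ≤
      Ideal.span (Set.range G) ⊔ Ideal.span {linForm ℓ} ⊔ idealOfVars σ ℂ ^ k := by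
  induction k with
  | zero => simp
  | succ k ih =>
    set A := Ideal.span (Set.range G) ⊔ Ideal.span {linForm ℓ}
    calc idealOfVars σ ℂ ≤ A ⊔ idealOfVars σ ℂ ^ 2 := idealOfVars_le_sup_sq hG hinj
      _ ≤ A ⊔ idealOfVars σ ℂ ^ (k + 1) := sup_le le_sup_left ?_
    calc idealOfVars σ ℂ ^ 2 = idealOfVars σ ℂ * idealOfVars σ ℂ := sq _
      _ ≤ (A ⊔ idealOfVars σ ℂ ^ k) * idealOfVars σ ℂ := Ideal.mul_mono_left ih
      _ ≤ A ⊔ idealOfVars σ ℂ ^ (k + 1) := by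
        rw [Ideal.sup_mul, pow_succ]
        exact sup_le_sup_right Ideal.mul_le_left _

theorem exists_sub_aeval_linForm_mem {G : ι → MvPolynomial σ ℂ} {ℓ : σ → ℂ}
    (hG : ∀ r, coeff 0 (G r) = 0) (hinj : InjOnTangent G 0 ℓ) (k d : ℕ)
    (f : MvPolynomial σ ℂ) :
    ∃ (a : Fin d → ℂ) (q : MvPolynomial σ ℂ),
      f - ∑ i, C (a i) * linForm ℓ ^ (i : ℕ) - linForm ℓ ^ d * q ∈
        Ideal.span (Set.range G) ⊔ idealOfVars σ ℂ ^ k := by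
  set K := Ideal.span (Set.range G) ⊔ idealOfVars σ ℂ ^ k
  have step : ∀ f : MvPolynomial σ ℂ, ∃ q, f - C (coeff 0 f) - linForm ℓ * q ∈ K := fun f => by
    have hf : f - C (coeff 0 f) ∈ idealOfVars σ ℂ := by
      rw [← pow_one (idealOfVars σ ℂ), mem_pow_idealOfVars_iff']
      intro α hα
      obtain rfl : α = 0 := (Finsupp.degree_eq_zero_iff α).1 (by omega)
      simp
    have h := idealOfVars_le_sup_pow hG hinj k hf
    rw [sup_right_comm] at h
    obtain ⟨y, hy, z, hz, hyz⟩ := Submodule.mem_sup.1 h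
    obtain ⟨q, rfl⟩ := Ideal.mem_span_singleton.1 hz
    exact ⟨q, by rwa [← hyz, add_sub_cancel_right]⟩
  induction d with
  | zero => exact ⟨0, f, by simp⟩
  | succ d ih =>
    obtain ⟨a, q, h⟩ := ih
    obtain ⟨q', h'⟩ := step q
    refine ⟨Fin.snoc a (coeff 0 q), q', ?_⟩
    rw [Fin.sum_univ_castSucc]
    simp only [Fin.snoc_castSucc, Fin.snoc_last, Fin.val_castSucc, Fin.val_last]
    convert K.add_mem h (K.mul_mem_left (linForm ℓ ^ d) h') using 1
    ring

theorem HasCurve.mono {G : ι → MvPolynomial σ ℂ} {p ℓ : σ → ℂ} {d e : ℕ} (hde : d ≤ e)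
    (h : HasCurve G p ℓ e) : HasCurve G p ℓ d :=
  let ⟨y, h0, hG, hℓ⟩ := h
  ⟨y, h0, fun r => (pow_dvd_pow _ hde).trans (hG r), (pow_dvd_pow _ hde).trans hℓ⟩

theorem linForm_pow_mem_of_not_hasCurve {G : ι → MvPolynomial σ ℂ} {ℓ : σ → ℂ}
    (hG : ∀ r, coeff 0 (G r) = 0) (hinj : InjOnTangent G 0 ℓ) {d : ℕ}
    (hd : ¬ HasCurve G 0 ℓ (d + 1)) (k : ℕ) :
    linForm ℓ ^ d ∈ Ideal.span (Set.range G) ⊔ idealOfVars σ ℂ ^ (k + 1) := by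
  set K := Ideal.span (Set.range G) ⊔ idealOfVars σ ℂ ^ (k + 1)
  have hGK : ∀ r, G r ∈ K := fun r => Ideal.mem_sup_left (Ideal.subset_span ⟨r, rfl⟩)
  have hK1 : ∀ f ∈ K, coeff 0 f = 0 := by
    have : K ≤ idealOfVars σ ℂ ^ 1 := by
      refine sup_le (Ideal.span_le.2 ?_) (Ideal.pow_le_pow_right (by omega))
      rintro _ ⟨r, rfl⟩
      refine (mem_pow_idealOfVars_iff' _ _).2 fun α hα => ?_
      obtain rfl : α = 0 := (Finsupp.degree_eq_zero_iff α).1 (by omega)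
      exact hG r
    exact fun f hf => (mem_pow_idealOfVars_iff' _ _).1 (this hf) 0 (by simp)
  have hℓk : linForm ℓ ^ (k + 1) ∈ K :=
    Ideal.mem_sup_right (Ideal.pow_mem_pow (linForm_mem ℓ) _)
  let φ : Polynomial ℂ →ₐ[ℂ] MvPolynomial σ ℂ := Polynomial.aeval (linForm ℓ)
  obtain ⟨g, hg⟩ := (inferInstance : (K.comap φ).IsPrincipal)
  have hmem : ∀ P, P ∈ K.comap φ ↔ g ∣ P := fun P => by
    rw [hg]; exact Ideal.mem_span_singleton
  obtain ⟨e, -, he⟩ := (_root_.dvd_prime_pow Polynomial.prime_X (k + 1)).1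
    ((hmem (Polynomial.X ^ (k + 1))).1 (by simpa [φ] using hℓk))
  have hmem' : ∀ P, φ P ∈ K ↔ Polynomial.X ^ e ∣ P := fun P => by
    rw [← he.dvd_iff_dvd_left]; exact hmem P
  have hX : ∀ i, ∃ P : Polynomial ℂ, φ P - X i ∈ K := fun i => by
    obtain ⟨a, q, h⟩ := exists_sub_aeval_linForm_mem hG hinj (k + 1) (k + 1) (X i)
    refine ⟨∑ j, Polynomial.C (a j) * Polynomial.X ^ (j : ℕ), ?_⟩
    have := K.neg_mem (K.add_mem h (K.mul_mem_right q hℓk))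
    convert this using 1
    simp [φ, algebraMap_eq]
  choose y hy using hX
  have hφ0 : ∀ P : Polynomial ℂ, coeff 0 (φ P) = P.coeff 0 := fun P => by
    have : coeff 0 (linForm ℓ) = 0 := by simp [linForm_apply, coeff_sum]
    rw [← constantCoeff_eq] at this ⊢
    have hid : (constantCoeff (σ := σ)).comp (algebraMap ℂ (MvPolynomial σ ℂ)) = RingHom.id ℂ := by
      ext
      simp
    simp only [φ, Polynomial.aeval_def, Polynomial.hom_eval₂, this, hid]
    exact (Polynomial.coeff_zero_eq_eval_zero P).symm
  have he' : HasCurve G 0 ℓ e := by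
    refine ⟨y, fun i => ?_, fun r => ?_, ?_⟩
    · have := hK1 _ (hy i)
      rw [coeff_sub, hφ0] at this
      simpa [coeff_zero_X] using this
    · rw [← hmem', ← AlgHom.comp_apply, comp_aeval]
      have := K.add_mem (aeval_sub_aeval_mem K hy (G r)) (by simpa using hGK r)
      simpa using this
    · rw [← hmem']
      have := Ideal.sum_mem K (t := Finset.univ) fun i _ => K.mul_mem_left (C (ℓ i)) (hy i)
      convert this using 1
      simp [φ, linForm_apply, mul_sub, Finset.sum_sub_distrib, algebraMap_eq]
  have hed : e ≤ d := by
    by_contra! hlt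
    exact hd (he'.mono hlt)
  simpa [φ] using (hmem' (Polynomial.X ^ d)).2 (pow_dvd_pow _ hed)

theorem exists_sub_sum_linForm_pow_mem {G : ι → MvPolynomial σ ℂ} {ℓ : σ → ℂ}
    (hG : ∀ r, coeff 0 (G r) = 0) (hinj : InjOnTangent G 0 ℓ) {d : ℕ}
    (hd : ¬ HasCurve G 0 ℓ (d + 1)) (k : ℕ) (f : MvPolynomial σ ℂ) :
    ∃ a : Fin d → ℂ, f - ∑ i, C (a i) * linForm ℓ ^ (i : ℕ) ∈
        Ideal.span (Set.range G) ⊔ idealOfVars σ ℂ ^ (k + 1) := by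
  obtain ⟨a, q, h⟩ := exists_sub_aeval_linForm_mem hG hinj (k + 1) d f
  have := Ideal.add_mem _ h
    (Ideal.mul_mem_right q _ (linForm_pow_mem_of_not_hasCurve hG hinj hd k))
  exact ⟨a, by simpa using this⟩

theorem HasCurve.of_taylorAt {G : ι → MvPolynomial σ ℂ} {p ℓ : σ → ℂ} {d : ℕ}
    (h : HasCurve (fun r => taylorAt p (G r)) 0 ℓ d) : HasCurve G p ℓ d := by
  obtain ⟨y, h0, hG, hℓ⟩ := h
  refine ⟨fun i => y i + Polynomial.C (p i), fun i => by simp [h0 i], fun r => ?_, ?_⟩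
  · have := hG r
    rwa [aeval_taylorAt] at this
  · simpa using hℓ

theorem InjOnTangent.taylorAt {G : ι → MvPolynomial σ ℂ} {p ℓ : σ → ℂ}
    (h : InjOnTangent G p ℓ) : InjOnTangent (fun r => taylorAt p (G r)) 0 ℓ := by
  intro u hu
  refine h u fun r => ?_
  have := hu r
  rw [aeval_taylorAt] at this
  simpa [add_comm, Polynomial.algebraMap_eq] using this

theorem mem_dualSpace_iff [DecidableEq σ] {p : σ → ℂ} {I : Ideal (MvPolynomial σ ℂ)}
    {c : (σ →₀ ℕ) →₀ ℂ} : c ∈ dualSpace p I ↔ ∀ f ∈ I, pairing c (taylorAt p f) = 0 := by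
  simp only [dualSpace, Submodule.mem_iInf, LinearMap.mem_ker, pairing_apply]
  rfl

/-- The values of the operators in the local dual space on the powers of a linear form. -/
noncomputable def dualSpaceEval [DecidableEq σ] (p ℓ : σ → ℂ) (I : Ideal (MvPolynomial σ ℂ))
    (d : ℕ) : dualSpace p I →ₗ[ℂ] Fin d → ℂ :=
  LinearMap.pi fun i => (pairing.flip (linForm ℓ ^ (i : ℕ))).comp (dualSpace p I).subtype

theorem dualSpaceEval_injective [DecidableEq σ] {G : ι → MvPolynomial σ ℂ} {p ℓ : σ → ℂ}
    (hG : ∀ r, eval p (G r) = 0) (hinj : InjOnTangent G p ℓ) {d : ℕ}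
    (hd : ¬ HasCurve G p ℓ (d + 1)) :
    Function.Injective (dualSpaceEval p ℓ (Ideal.span (Set.range G)) d) := by
  rw [injective_iff_map_eq_zero]
  rintro ⟨c, hc⟩ h0
  rw [mem_dualSpace_iff] at hc
  have hpow : ∀ i : Fin d, pairing c (linForm ℓ ^ (i : ℕ)) = 0 := fun i => congrFun h0 i
  have hideal : ∀ g ∈ Ideal.span (Set.range fun r => taylorAt p (G r)), pairing c g = 0 := by
    intro g hg
    rw [Set.range_comp' (taylorAt p) G, ← Ideal.map_span,
      Ideal.mem_map_iff_of_surjective _ (taylorAt_surjective p)] at hg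
    obtain ⟨f, hf, rfl⟩ := hg
    exact hc f hf
  have hvars : ∀ g ∈ idealOfVars σ ℂ ^ (c.support.sup Finsupp.degree + 1), pairing c g = 0 := by
    intro g hg
    rw [pairing_apply, Finsupp.linearCombination_apply]
    refine Finset.sum_eq_zero fun α hα => ?_
    simp [(mem_pow_idealOfVars_iff' _ _).1 hg α (Nat.lt_succ_of_le (Finset.le_sup hα))]
  have hall : ∀ g, pairing c g = 0 := by
    intro g
    obtain ⟨a, ha⟩ := exists_sub_sum_linForm_pow_mem
      (fun r => by rw [coeff_zero_taylorAt]; exact hG r) hinj.taylorAt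
      (fun h => hd h.of_taylorAt) (c.support.sup Finsupp.degree) g
    obtain ⟨u, hu, v, hv, huv⟩ := Submodule.mem_sup.1 ha
    rw [eq_add_of_sub_eq huv.symm, map_add, map_add, hideal u hu, hvars v hv, map_sum]
    simp [← smul_eq_C_mul, hpow]
  ext α
  rw [← pairing_monomial, hall]
  rfl

theorem exists_pairing_eq_coeff_aeval {z : σ → Polynomial ℂ} (hz : ∀ i, Polynomial.X ∣ z i)
    (j : ℕ) : ∃ c : (σ →₀ ℕ) →₀ ℂ, ∀ g, pairing c g = (aeval z g).coeff j := by
  classical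
  let c : (σ →₀ ℕ) →₀ ℂ := Finsupp.onFinset (Finsupp.finite_of_degree_le j).toFinset
    (fun α => (aeval z (monomial α (1 : ℂ))).coeff j) fun α hα => by
      rw [Set.Finite.mem_toFinset]
      by_contra! hlt
      refine hα (Polynomial.X_pow_dvd_iff.1 (X_pow_dvd_aeval_of_mem_pow hz
        ((monomial_mem_pow_idealOfVars_iff _ α one_ne_zero).2 le_rfl)) j ?_)
      simpa using hlt
  have : pairing c = (Polynomial.lcoeff ℂ j).comp (aeval z).toLinearMap :=
    (basisMonomials σ ℂ).ext fun α => by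
      rw [coe_basisMonomials, pairing_monomial]
      simp [c]
  exact ⟨c, fun g => by rw [this]; rfl⟩

theorem dualSpaceEval_surjective [DecidableEq σ] {G : ι → MvPolynomial σ ℂ} {p ℓ : σ → ℂ} {d : ℕ}
    (h : HasCurve G p ℓ d) :
    Function.Surjective (dualSpaceEval p ℓ (Ideal.span (Set.range G)) d) := by
  obtain ⟨y, h0, hG, hℓ⟩ := h
  have hz : ∀ i, Polynomial.X ∣ y i - Polynomial.C (p i) := fun i => by
    simp [Polynomial.X_dvd_iff, h0 i]
  have hI : ∀ f ∈ Ideal.span (Set.range G), Polynomial.X ^ d ∣ aeval y f := fun f hf => by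
    have hle : Ideal.span (Set.range G) ≤ (Ideal.span {Polynomial.X ^ d}).comap (aeval y) := by
      rw [Ideal.span_le]
      rintro _ ⟨r, rfl⟩
      exact Ideal.mem_span_singleton.2 (hG r)
    exact Ideal.mem_span_singleton.1 (hle hf)
  rw [← LinearMap.range_eq_top, ← top_le_iff, ← (Pi.basisFun ℂ (Fin d)).span_eq, Submodule.span_le]
  rintro _ ⟨j, rfl⟩
  obtain ⟨c, hc⟩ := exists_pairing_eq_coeff_aeval hz j
  refine ⟨⟨c, mem_dualSpace_iff.2 fun f hf => ?_⟩, funext fun i => ?_⟩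
  · rw [hc, aeval_taylorAt]
    simpa [Polynomial.algebraMap_eq] using Polynomial.X_pow_dvd_iff.1 (hI f hf) j j.2
  · change pairing c (linForm ℓ ^ (i : ℕ)) = _
    have hsub := Polynomial.X_pow_dvd_iff.1
      (hℓ.trans (sub_dvd_pow_sub_pow _ _ (i : ℕ))) j j.2
    rw [Polynomial.coeff_sub, sub_eq_zero] at hsub
    rw [hc, map_pow, linForm_apply, map_sum]
    simp only [map_mul, aeval_X, algHom_C, Polynomial.algebraMap_eq, hsub]
    simp [Polynomial.coeff_X_pow, Pi.single_apply, Fin.ext_iff, eq_comm]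

theorem finite_submodule_of_finrank_pos {V : Type*} [AddCommGroup V] [Module ℂ V]
    (S : Submodule ℂ V) (h : 0 < Module.finrank ℂ S) : Module.Finite ℂ S :=
  Module.finite_of_finrank_pos h

/-- A local dual space of finite dimension `d` is detected by the curves solving the system. -/
theorem hasCurve_of_finrank_dualSpace [DecidableEq σ] {G : ι → MvPolynomial σ ℂ} {p ℓ : σ → ℂ}
    (hG : ∀ r, eval p (G r) = 0) (hinj : InjOnTangent G p ℓ) {d : ℕ}
    (hd : Module.finrank ℂ (dualSpace p (Ideal.span (Set.range G))) = d + 1) :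
    HasCurve G p ℓ (d + 1) ∧ ¬ HasCurve G p ℓ (d + 2) := by
  have : Module.Finite ℂ (dualSpace p (Ideal.span (Set.range G))) :=
    finite_submodule_of_finrank_pos _ (by omega)
  constructor
  · by_contra hcon
    have := LinearMap.finrank_le_finrank_of_injective (dualSpaceEval_injective hG hinj hcon)
    simp at this
    omega
  · intro hcon
    have := LinearMap.finrank_le_finrank_of_surjective (dualSpaceEval_surjective hcon)
    simp at this
    omega

theorem finrank_dualSpace_eq [DecidableEq σ] {G : ι → MvPolynomial σ ℂ} {p ℓ : σ → ℂ}
    (hG : ∀ r, eval p (G r) = 0) (hinj : InjOnTangent G p ℓ) {d : ℕ}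
    (hd : HasCurve G p ℓ d) (hd' : ¬ HasCurve G p ℓ (d + 1)) :
    Module.finrank ℂ (dualSpace p (Ideal.span (Set.range G))) = d := by
  simpa using (LinearEquiv.ofBijective _
    ⟨dualSpaceEval_injective hG hinj hd', dualSpaceEval_surjective hd⟩).finrank_eq

end Curves
section Deflation

theorem aeval_C_comp {σ : Type*} (p : σ → ℂ) (g : MvPolynomial σ ℂ) :
    aeval (fun i => Polynomial.C (p i)) g = Polynomial.C (eval p g) := by
  rw [← Polynomial.algebraMap_eq, ← coe_aeval_eq_eval]
  exact aeval_algebraMap_apply _ p g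

theorem sum_pderiv_mul_eq_zero_of_X_sq_dvd {σ : Type*} [Fintype σ] {p u : σ → ℂ}
    {f : MvPolynomial σ ℂ} (h : Polynomial.X ^ 2 ∣
      aeval (fun i => Polynomial.C (p i) + Polynomial.X * Polynomial.C (u i)) f) :
    ∑ j, eval p (pderiv j f) * u j = 0 := by
  have h1 := (dvd_sub_right h).1 (by
    simpa [sub_sub] using sq_dvd_aeval_add_mul_sub (fun i => Polynomial.C (p i))
      (fun i => Polynomial.C (u i)) Polynomial.X f)
  have h2 := Polynomial.X_pow_dvd_iff.1 h1 1 one_lt_two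
  simp only [aeval_C_comp, ← Polynomial.C_mul, ← map_sum] at h2
  simpa using h2

variable {n : ℕ} {F : Fin n → MvPolynomial (Fin n) ℂ} {xe ν h : Fin n → ℂ}

section Eval

variable {B : Type*} [CommRing B] [Algebra ℂ B] (z : Fin n ⊕ Fin n → B)

theorem aeval_deflSys_inl (i : Fin n) :
    aeval z (deflSys F h (Sum.inl i)) = aeval (fun j => z (Sum.inl j)) (F i) := by
  simp [deflSys, aeval_rename, Function.comp_def]

theorem aeval_deflSys_inr_inl (i : Fin n) :
    aeval z (deflSys F h (Sum.inr (Sum.inl i)))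
      = ∑ j, aeval (fun j => z (Sum.inl j)) (pderiv j (F i)) * z (Sum.inr j) := by
  simp [deflSys, aeval_rename, Function.comp_def]

theorem aeval_deflSys_inr_inr :
    aeval z (deflSys F h (Sum.inr (Sum.inr ())))
      = ∑ j, algebraMap ℂ B (starRingEnd ℂ (h j)) * z (Sum.inr j) - 1 := by
  simp [deflSys]

end Eval

/-- The conjugate of `h` is injective on the kernel of the Jacobian of `F` at `xe`. -/
def InjOnKer (F : Fin n → MvPolynomial (Fin n) ℂ) (xe h : Fin n → ℂ) : Prop :=
  ∀ u : Fin n → ℂ, (∀ i, ∑ j, eval xe (pderiv j (F i)) * u j = 0) →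
    ∑ j, starRingEnd ℂ (h j) * u j = 0 → u = 0

theorem InjOnKer.injOnTangent (hinj : InjOnKer F xe h) :
    InjOnTangent F xe (fun j => starRingEnd ℂ (h j)) :=
  fun u hu => hinj u fun i => sum_pderiv_mul_eq_zero_of_X_sq_dvd (hu i)

theorem InjOnKer.injOnTangent_deflSys (hinj : InjOnKer F xe h) :
    InjOnTangent (deflSys F h) (Sum.elim xe ν) (Sum.elim (fun j => starRingEnd ℂ (h j)) 0) := by
  intro w hw hℓ
  have hu : (fun j => w (Sum.inl j)) = 0 := by
    refine hinj.injOnTangent _ (fun i => ?_) (by simpa using hℓ)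
    have := hw (Sum.inl i)
    rw [aeval_deflSys_inl] at this
    simpa using this
  have hv : (fun j => w (Sum.inr j)) = 0 := by
    refine hinj _ (fun i => ?_) ?_
    · have := Polynomial.X_pow_dvd_iff.1 (hw (Sum.inr (Sum.inl i))) 1 one_lt_two
      rw [aeval_deflSys_inr_inl] at this
      simpa [congrFun hu, aeval_C_comp, Polynomial.finsetSum_coeff, Polynomial.coeff_C_mul,
        Polynomial.coeff_C, mul_add] using this
    · have := Polynomial.X_pow_dvd_iff.1 (hw (Sum.inr (Sum.inr ()))) 1 one_lt_two
      rw [aeval_deflSys_inr_inr] at this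
      simpa [Polynomial.algebraMap_eq, Polynomial.finsetSum_coeff, Polynomial.coeff_C_mul,
        Polynomial.coeff_C, Polynomial.coeff_one, mul_add] using this
  ext (j | j)
  · exact congrFun hu j
  · exact congrFun hv j

/-- A curve together with its velocity solves the deflated system. -/
theorem hasCurve_deflSys (hinj : InjOnKer F xe h)
    (hν : ∀ i, ∑ j, eval xe (pderiv j (F i)) * ν j = 0)
    (hν1 : ∑ j, starRingEnd ℂ (h j) * ν j = 1) {d : ℕ}
    (hc : HasCurve F xe (fun j => starRingEnd ℂ (h j)) (d + 2)) :
    HasCurve (deflSys F h) (Sum.elim xe ν)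
      (Sum.elim (fun j => starRingEnd ℂ (h j)) 0) (d + 1) := by
  obtain ⟨x, h0, hF, hℓ⟩ := hc
  have h0' : (fun i => (x i).coeff 0) = xe := funext h0
  have hder : ∀ {P : Polynomial ℂ}, Polynomial.X ^ (d + 2) ∣ P →
      Polynomial.X ^ (d + 1) ∣ Polynomial.derivative P :=
    fun hP => by simpa using Polynomial.pow_sub_one_dvd_derivative_of_pow_dvd hP
  have hF' : ∀ i, Polynomial.X ^ (d + 1) ∣
      ∑ j, aeval x (pderiv j (F i)) * Polynomial.derivative (x j) := fun i => by
    rw [← derivative_aeval]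
    exact hder (hF i)
  have hℓ' : Polynomial.X ^ (d + 1) ∣
      ∑ j, Polynomial.C (starRingEnd ℂ (h j)) * Polynomial.derivative (x j) - 1 := by
    simpa using hder hℓ
  have hv : (fun j => (Polynomial.derivative (x j)).coeff 0 - ν j) = 0 := by
    refine hinj _ (fun i => ?_) ?_
    · have := Polynomial.X_pow_dvd_iff.1 (hF' i) 0 (Nat.succ_pos d)
      simp only [Polynomial.finsetSum_coeff, Polynomial.mul_coeff_zero, coeff_zero_aeval,
        h0'] at this
      simp only [mul_sub, Finset.sum_sub_distrib, this, hν, sub_zero]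
    · have := Polynomial.X_pow_dvd_iff.1 hℓ' 0 (Nat.succ_pos d)
      simp only [Polynomial.finsetSum_coeff, Polynomial.mul_coeff_zero, Polynomial.coeff_sub,
        Polynomial.coeff_C_zero, Polynomial.coeff_one_zero] at this
      simp only [mul_sub, Finset.sum_sub_distrib, hν1, this]
  refine ⟨Sum.elim x fun j => Polynomial.derivative (x j), ?_, ?_, ?_⟩
  · rintro (j | j)
    · exact h0 j
    · exact sub_eq_zero.1 (congrFun hv j)
  · rintro (i | i | ⟨⟩)
    · rw [aeval_deflSys_inl]
      exact (pow_dvd_pow _ (Nat.le_succ _)).trans (hF i)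
    · rw [aeval_deflSys_inr_inl]
      exact hF' i
    · rw [aeval_deflSys_inr_inr, Polynomial.algebraMap_eq]
      exact hℓ'
  · simpa using (pow_dvd_pow _ (Nat.le_succ _)).trans hℓ

/-- Solutions of the linearized system along a curve vanish to high order. -/
theorem InjOnKer.exists_eq_X_pow_mul (hinj : InjOnKer F xe h) {x : Fin n → Polynomial ℂ}
    (h0 : (fun i => (x i).coeff 0) = xe) {d : ℕ} {w : Fin n → Polynomial ℂ}
    (hF : ∀ i, Polynomial.X ^ d ∣ ∑ j, aeval x (pderiv j (F i)) * w j)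
    (hℓ : Polynomial.X ^ d ∣ ∑ j, Polynomial.C (starRingEnd ℂ (h j)) * w j) :
    ∃ v : Fin n → Polynomial ℂ, ∀ j, w j = Polynomial.X ^ d * v j := by
  induction d with
  | zero => exact ⟨w, by simp⟩
  | succ d ih =>
    obtain ⟨v, hv⟩ := ih (fun i => (pow_dvd_pow _ (Nat.le_succ d)).trans (hF i))
      ((pow_dvd_pow _ (Nat.le_succ d)).trans hℓ)
    have hX : (Polynomial.X : Polynomial ℂ) ^ d ≠ 0 := pow_ne_zero _ Polynomial.X_ne_zero
    have hcancel : ∀ a : Fin n → Polynomial ℂ,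
        Polynomial.X ^ (d + 1) ∣ ∑ j, a j * w j → ∑ j, (a j).coeff 0 * (v j).coeff 0 = 0 := by
      intro a ha
      have heq : ∑ j, a j * w j = Polynomial.X ^ d * ∑ j, a j * v j := by
        rw [Finset.mul_sum]
        exact Finset.sum_congr rfl fun j _ => by rw [hv]; ring
      rw [heq, pow_succ, mul_dvd_mul_iff_left hX, Polynomial.X_dvd_iff] at ha
      simpa [Polynomial.finsetSum_coeff, Polynomial.mul_coeff_zero] using ha
    have hv0 : (fun j => (v j).coeff 0) = 0 := by
      refine hinj _ (fun i => ?_) ?_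
      · simpa only [coeff_zero_aeval, h0] using hcancel _ (hF i)
      · simpa using hcancel _ hℓ
    choose v' hv' using fun j => Polynomial.X_dvd_iff.2 (congrFun hv0 j)
    exact ⟨v', fun j => by rw [hv, hv', pow_succ, mul_assoc]⟩

/-- A solution curve of the deflated system can be lifted to a solution curve of the original
system of one order higher. -/
theorem hasCurve_of_hasCurve_deflSys (hinj : InjOnKer F xe h)
    (hν : ∀ i, ∑ j, eval xe (pderiv j (F i)) * ν j = 0)
    (hν1 : ∑ j, starRingEnd ℂ (h j) * ν j = 1) {d : ℕ}
    (hc : HasCurve (deflSys F h) (Sum.elim xe ν)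
      (Sum.elim (fun j => starRingEnd ℂ (h j)) 0) (d + 1)) :
    HasCurve F xe (fun j => starRingEnd ℂ (h j)) (d + 2) := by
  obtain ⟨z, hz0, hz, hℓ⟩ := hc
  set x : Fin n → Polynomial ℂ := fun j => z (Sum.inl j)
  have h0 : (fun i => (x i).coeff 0) = xe := funext fun i => hz0 (Sum.inl i)
  have hF : ∀ i, Polynomial.X ^ (d + 1) ∣ aeval x (F i) := fun i => by
    simpa only [aeval_deflSys_inl] using hz (Sum.inl i)
  have hFz : ∀ i, Polynomial.X ^ (d + 1) ∣
      ∑ j, aeval x (pderiv j (F i)) * z (Sum.inr j) := fun i => by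
    simpa only [aeval_deflSys_inr_inl] using hz (Sum.inr (Sum.inl i))
  have hhz : Polynomial.X ^ (d + 1) ∣
      ∑ j, Polynomial.C (starRingEnd ℂ (h j)) * z (Sum.inr j) - 1 := by
    simpa only [aeval_deflSys_inr_inr, Polynomial.algebraMap_eq] using hz (Sum.inr (Sum.inr ()))
  have hℓx : Polynomial.X ^ (d + 1) ∣
      ∑ j, Polynomial.C (starRingEnd ℂ (h j)) * (x j - Polynomial.C (xe j)) - Polynomial.X := by
    simpa using hℓ
  have hder : ∀ {P : Polynomial ℂ}, Polynomial.X ^ (d + 1) ∣ P →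
      Polynomial.X ^ d ∣ Polynomial.derivative P :=
    fun hP => by simpa using Polynomial.pow_sub_one_dvd_derivative_of_pow_dvd hP
  obtain ⟨w, hw⟩ := hinj.exists_eq_X_pow_mul h0 (d := d)
    (w := fun j => Polynomial.derivative (x j) - z (Sum.inr j))
    (fun i => by
      simp only [mul_sub, Finset.sum_sub_distrib]
      rw [← derivative_aeval]
      exact dvd_sub (hder (hF i)) ((pow_dvd_pow _ (Nat.le_succ d)).trans (hFz i)))
    (by
      have := dvd_sub (hder hℓx) ((pow_dvd_pow _ (Nat.le_succ d)).trans hhz)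
      simpa [mul_sub] using this)
  choose a ha using hF
  obtain ⟨b, hb⟩ := hℓx
  have hX : (Polynomial.X : Polynomial ℂ) ^ d ≠ 0 := pow_ne_zero _ Polynomial.X_ne_zero
  have hd : ((d : ℂ) + 1) ≠ 0 := Nat.cast_add_one_ne_zero d
  have hw0 : ∀ i, ∑ j, eval xe (pderiv j (F i)) * (w j).coeff 0 = (d + 1) * (a i).coeff 0 := by
    intro i
    have h1 : Polynomial.derivative (aeval x (F i))
        = ∑ j, aeval x (pderiv j (F i)) * z (Sum.inr j)
          + Polynomial.X ^ d * ∑ j, aeval x (pderiv j (F i)) * w j := by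
      rw [derivative_aeval, Finset.mul_sum, ← Finset.sum_add_distrib]
      exact Finset.sum_congr rfl fun j _ => by linear_combination aeval x (pderiv j (F i)) * hw j
    obtain ⟨q, hq⟩ := hFz i
    rw [ha, hq, Polynomial.derivative_mul, Polynomial.derivative_X_pow] at h1
    have h2 : Polynomial.C ((d : ℂ) + 1) * a i + Polynomial.X * Polynomial.derivative (a i)
        = Polynomial.X * q + ∑ j, aeval x (pderiv j (F i)) * w j := by
      apply mul_left_cancel₀ hX
      simp only [Nat.cast_add, Nat.cast_one, Nat.add_sub_cancel] at h1
      linear_combination h1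
    have h3 := congrArg (fun P => Polynomial.coeff P 0) h2
    simp only [Polynomial.coeff_add, Polynomial.mul_coeff_zero, Polynomial.coeff_X_zero, zero_mul,
      Polynomial.coeff_C_zero, Polynomial.finsetSum_coeff, coeff_zero_aeval, h0, add_zero,
      zero_add] at h3
    exact h3.symm
  set c : ℂ := (∑ j, starRingEnd ℂ (h j) * (w j).coeff 0) / (d + 1) - b.coeff 0 with hcdef
  let v : Fin n → ℂ := fun j => c * ν j - (w j).coeff 0 / (d + 1)
  have hvF : ∀ i, ∑ j, eval xe (pderiv j (F i)) * v j = - (a i).coeff 0 := fun i => by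
    have : ∀ j, eval xe (pderiv j (F i)) * v j = c * (eval xe (pderiv j (F i)) * ν j)
        - (eval xe (pderiv j (F i)) * (w j).coeff 0) / (d + 1) := fun j => by
      simp only [v]; ring
    simp only [this, Finset.sum_sub_distrib, ← Finset.mul_sum, ← Finset.sum_div, hν, hw0]
    field_simp
    ring
  have hvℓ : ∑ j, starRingEnd ℂ (h j) * v j = - b.coeff 0 := by
    have : ∀ j, starRingEnd ℂ (h j) * v j = c * (starRingEnd ℂ (h j) * ν j)
        - (starRingEnd ℂ (h j) * (w j).coeff 0) / (d + 1) := fun j => by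
      simp only [v]; ring
    simp only [this, Finset.sum_sub_distrib, ← Finset.mul_sum, ← Finset.sum_div, hν1, hcdef]
    ring
  refine ⟨fun j => x j + Polynomial.X ^ (d + 1) * Polynomial.C (v j), fun j => ?_, fun i => ?_, ?_⟩
  · simpa [Polynomial.mul_coeff_zero] using congrFun h0 j
  · have hT := sq_dvd_aeval_add_mul_sub x (fun j => Polynomial.C (v j))
      (Polynomial.X ^ (d + 1)) (F i)
    rw [← pow_mul] at hT
    replace hT := (pow_dvd_pow Polynomial.X (show d + 2 ≤ (d + 1) * 2 by omega)).trans hT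
    rw [sub_sub] at hT
    refine (dvd_sub_left ?_).1 hT
    rw [ha, ← mul_add, pow_succ _ (d + 1)]
    refine mul_dvd_mul_left _ ?_
    rw [Polynomial.X_dvd_iff]
    simp only [Polynomial.coeff_add, Polynomial.mul_coeff_zero, Polynomial.coeff_C_zero,
      Polynomial.finsetSum_coeff, coeff_zero_aeval, h0, hvF]
    ring
  · have : ∑ j, Polynomial.C (starRingEnd ℂ (h j)) *
        (x j + Polynomial.X ^ (d + 1) * Polynomial.C (v j) - Polynomial.C (xe j)) - Polynomial.X
        = Polynomial.X ^ (d + 1) * (b + Polynomial.C (∑ j, starRingEnd ℂ (h j) * v j)) := by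
      rw [mul_add, ← hb, map_sum, Finset.mul_sum, sub_add_eq_add_sub, ← Finset.sum_add_distrib]
      congr 1
      exact Finset.sum_congr rfl fun j _ => by rw [Polynomial.C_mul]; ring
    rw [this, pow_succ _ (d + 1)]
    refine mul_dvd_mul_left _ ?_
    rw [Polynomial.X_dvd_iff, Polynomial.coeff_add, hvℓ, Polynomial.coeff_C_zero]
    ring

end Deflation

/-- (Dayton–Zeng conjecture, breadth one case.) Let `F` be a polynomial system with isolated
singular solution `x̂ₑ` of multiplicity `μ ≥ 2` whose Jacobian `F'(x̂ₑ)` has corank one with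
unit null vector `r₁`. Then for any `h ∈ ℂⁿ` with `h*r₁ ≠ 0`, the deflated system
`J(x,ν) = (F(x), F'(x)·ν, h*ν − 1)` has `(x̂ₑ, r₁/(h*r₁))` as an isolated singular solution
of multiplicity exactly `μ − 1`. -/
theorem dayton_zeng_breadth_one_deflation {n : ℕ}
    (F : Fin n → MvPolynomial (Fin n) ℂ) (xe : Fin n → ℂ)
    (hzero : ∀ i, MvPolynomial.eval xe (F i) = 0)
    (hisolated : ∀ᶠ q in nhds xe,
        (∀ f ∈ Ideal.span (Set.range F), MvPolynomial.eval q f = 0) → q = xe)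
    (μ : ℕ) (hμ : μ = Module.finrank ℂ ↥(dualSpace xe (Ideal.span (Set.range F))))
    (hμ2 : 2 ≤ μ)
    (r₁ : Fin n → ℂ) (hr₁ : ∑ i, ‖r₁ i‖ ^ 2 = 1)
    (hker : LinearMap.ker (Matrix.mulVecLin (jacMat F xe)) = Submodule.span ℂ {r₁})
    (h : Fin n → ℂ) (hh : ∑ j, starRingEnd ℂ (h j) * r₁ j ≠ 0) :
    (∀ r, MvPolynomial.eval
        (Sum.elim xe fun j => r₁ j / ∑ k, starRingEnd ℂ (h k) * r₁ k)
        (deflSys F h r) = 0) ∧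
    (∀ᶠ q in nhds (Sum.elim xe fun j => r₁ j / ∑ k, starRingEnd ℂ (h k) * r₁ k),
        (∀ f ∈ Ideal.span (Set.range (deflSys F h)), MvPolynomial.eval q f = 0) →
          q = Sum.elim xe fun j => r₁ j / ∑ k, starRingEnd ℂ (h k) * r₁ k) ∧
    Module.finrank ℂ
        ↥(dualSpace (Sum.elim xe fun j => r₁ j / ∑ k, starRingEnd ℂ (h k) * r₁ k)
          (Ideal.span (Set.range (deflSys F h)))) = μ - 1 := by
  set s := ∑ k, starRingEnd ℂ (h k) * r₁ k with hs
  set ν : Fin n → ℂ := fun j => r₁ j / s with hνdef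
  have hjac : ∀ u : Fin n → ℂ, (∀ i, ∑ j, eval xe (pderiv j (F i)) * u j = 0) ↔
      ∃ a : ℂ, a • r₁ = u := fun u => by
    rw [← Submodule.mem_span_singleton, ← hker, LinearMap.mem_ker, Matrix.mulVecLin_apply,
      funext_iff]
    rfl
  have hν : ∀ i, ∑ j, eval xe (pderiv j (F i)) * ν j = 0 :=
    (hjac ν).2 ⟨s⁻¹, funext fun j => by simp [hνdef, div_eq_inv_mul]⟩
  have hν1 : ∑ j, starRingEnd ℂ (h j) * ν j = 1 := by
    simp only [hνdef, ← mul_div_assoc, ← Finset.sum_div]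
    exact div_self hh
  have hline : ∀ u : Fin n → ℂ, (∀ i, ∑ j, eval xe (pderiv j (F i)) * u j = 0) →
      u = (∑ j, starRingEnd ℂ (h j) * u j) • ν := fun u hu => by
    obtain ⟨a, rfl⟩ := (hjac u).1 hu
    have : ∑ j, starRingEnd ℂ (h j) * (a • r₁) j = a * s := by
      simp [hs, Finset.mul_sum, mul_left_comm]
    rw [this]
    funext j
    simp only [hνdef, Pi.smul_apply, smul_eq_mul]
    field_simp
  have hinj : InjOnKer F xe h := fun u hu hu0 => by rw [hline u hu, hu0, zero_smul]
  have hzeroJ : ∀ r, eval (Sum.elim xe ν) (deflSys F h r) = 0 := by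
    rintro (i | i | ⟨⟩) <;> rw [← coe_aeval_eq_eval, RingHom.coe_coe]
    · rw [aeval_deflSys_inl]
      exact hzero i
    · rw [aeval_deflSys_inr_inl]
      exact hν i
    · rw [aeval_deflSys_inr_inr]
      exact sub_eq_zero.2 hν1
  refine ⟨hzeroJ, ?_, ?_⟩
  · have hcont : Filter.Tendsto (fun q : Fin n ⊕ Fin n → ℂ => fun j => q (Sum.inl j))
        (nhds (Sum.elim xe ν)) (nhds xe) :=
      (continuous_pi fun j => continuous_apply (Sum.inl j)).tendsto' _ _ rfl
    filter_upwards [hcont.eventually hisolated] with q hq hqJ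
    have hJ : ∀ r, aeval q (deflSys F h r) = 0 := fun r => hqJ _ (Ideal.subset_span ⟨r, rfl⟩)
    have hx : (fun j => q (Sum.inl j)) = xe := by
      refine hq fun f hf => ?_
      have hle : Ideal.span (Set.range F) ≤
          RingHom.ker (eval fun j => q (Sum.inl j) : MvPolynomial (Fin n) ℂ →+* ℂ) := by
        rw [Ideal.span_le]
        rintro _ ⟨i, rfl⟩
        have := hJ (Sum.inl i)
        rwa [aeval_deflSys_inl] at this
      exact hle hf
    have hy : (fun j => q (Sum.inr j)) = ν := by
      have h1 : ∑ j, starRingEnd ℂ (h j) * q (Sum.inr j) = 1 := by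
        have := hJ (Sum.inr (Sum.inr ()))
        rw [aeval_deflSys_inr_inr] at this
        exact sub_eq_zero.1 this
      have h2 := hline (fun j => q (Sum.inr j)) fun i => by
        have := hJ (Sum.inr (Sum.inl i))
        rwa [aeval_deflSys_inr_inl, hx] at this
      rwa [h1, one_smul] at h2
    ext (j | j)
    · exact congrFun hx j
    · exact congrFun hy j
  · obtain ⟨d, rfl⟩ := Nat.exists_eq_add_of_le' hμ2
    obtain ⟨hcurve, hnot⟩ := hasCurve_of_finrank_dualSpace (d := d + 1) hzero hinj.injOnTangent
      hμ.symm
    exact finrank_dualSpace_eq hzeroJ hinj.injOnTangent_deflSys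
      (hasCurve_deflSys hinj hν hν1 hcurve) fun hc => hnot (hasCurve_of_hasCurve_deflSys hinj hν hν1 hc)
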